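/- arXiv:2410.23216 — 6 statements merged into one kernel-verified Lean document; each statement's English description precedes it below -/
import Mathlib

section
/- Let n and k be positive integers. There exists a Heffter array H(n;k) — that is, an n×n partially filled array with entries in Z_{2nk+1} such that every row and every column contains exactly k filled cells, the filled entries of every row and of every column sum to 0 in Z_{2nk+1}, and for every nonzero x in Z_{2nk+1} exactly one cell of the array contains x or -x — if and only if 3 ≤ k ≤ n. -/
/-!
If `x ≠ 0` lies in some row, that row cannot sum to zero with one or two nonzero entries, since the
second one would be `-x`, a repetition up to sign; so `3 ≤ k`.

Conversely, fill `k` consecutive cyclic diagonals, with `D d i` in the cell `(i, i + d)`. We look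
for integer entries whose row and column sums vanish over `ℤ`. As there are `n * k` cells, the
half-set condition holds by counting as soon as every `y` in `1, …, n * k` is an entry up to sign
modulo `2 * n * k + 1`. The entries `±(a + i)`, `±(b + i)`, `±(a + n + i)`, `±(b + n + i)` form a
zero-sum band of four diagonals covering two intervals of length `2 * n`. It therefore suffices to
find, for `k` equal to `0`, `3`, `5` or `6`, a band that covers everything but two gaps of arbitrary
common length `G`; diagonals added four at a time fill the gaps. For `k = 3` and `k = 5` such bands
come from sequences interleaving two arithmetic progressions, because then the values, shifted
values and sums of neighbours all run through intervals.
-/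

open Finset

/-! ### Heffter arrays -/

theorem exists_notMem_ne_zero_of_sum_ne_zero {ι M : Type*} [Fintype ι] [AddCommMonoid M]
    {f : ι → M} (hf : ∑ j, f j = 0) {s : Finset ι} (hs : ∑ j ∈ s, f j ≠ 0) :
    ∃ j ∉ s, f j ≠ 0 := by
  by_contra! h
  exact hs ((sum_subset (subset_univ s) fun j _ hj => h j hj).trans hf)

theorem eq_some_getD_of_getD_ne {α : Type*} {o : Option α} {a : α} (h : o.getD a ≠ a) :
    o = some (o.getD a) := by
  cases o with
  | none => exact absurd rfl h
  | some x => rfl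

section HeffterArray

variable {R : Type*} [AddCommGroup R] {n k : ℕ} {A : Fin n → Fin n → Option R}

/-- A square Heffter array with `k` filled cells in each row and column, over an arbitrary abelian
group; an empty cell is `none`. The half-set condition `existsUnique_cell` says that every nonzero
element occurs exactly once up to sign. -/
structure IsHeffterArray (k : ℕ) (A : Fin n → Fin n → Option R) : Prop where
  card_row : ∀ i, (univ.filter fun j => (A i j).isSome).card = k
  card_col : ∀ j, (univ.filter fun i => (A i j).isSome).card = k
  sum_row : ∀ i, ∑ j, (A i j).getD 0 = 0
  sum_col : ∀ j, ∑ i, (A i j).getD 0 = 0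
  existsUnique_cell : ∀ x : R, x ≠ 0 →
    ∃! p : Fin n × Fin n, A p.1 p.2 = some x ∨ A p.1 p.2 = some (-x)

theorem IsHeffterArray.le (hA : IsHeffterArray k A) (i : Fin n) : k ≤ n :=
  calc k = (univ.filter fun j => (A i j).isSome).card := (hA.card_row i).symm
    _ ≤ n := (card_filter_le _ _).trans_eq (card_fin n)

theorem IsHeffterArray.three_le [Nontrivial R] (hA : IsHeffterArray k A) : 3 ≤ k := by
  obtain ⟨i, j, x, hx, hij⟩ : ∃ i j x, x ≠ 0 ∧ A i j = some x := by
    obtain ⟨x, hx⟩ := exists_ne (0 : R)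
    obtain ⟨⟨i, j⟩, h | h, -⟩ := hA.existsUnique_cell x hx
    exacts [⟨i, j, x, hx, h⟩, ⟨i, j, -x, neg_ne_zero.2 hx, h⟩]
  obtain ⟨j₂, hj₂, hne₂⟩ : ∃ j₂ ∉ ({j} : Finset (Fin n)), (A i j₂).getD 0 ≠ 0 :=
    exists_notMem_ne_zero_of_sum_ne_zero (hA.sum_row i) (by simpa [hij] using hx)
  have hjj₂ : j ≠ j₂ := fun h => hj₂ (mem_singleton.2 h.symm)
  have hsum : x + (A i j₂).getD 0 ≠ 0 := fun h => hjj₂ <| congrArg Prod.snd <|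
    (hA.existsUnique_cell x hx).unique (y₁ := (i, j)) (y₂ := (i, j₂)) (Or.inl hij)
      (Or.inr (by rw [← eq_neg_of_add_eq_zero_right h, ← eq_some_getD_of_getD_ne hne₂]))
  obtain ⟨j₃, hj₃, hne₃⟩ : ∃ j₃ ∉ ({j, j₂} : Finset (Fin n)), (A i j₃).getD 0 ≠ 0 :=
    exists_notMem_ne_zero_of_sum_ne_zero (hA.sum_row i) (by
      rwa [sum_pair hjj₂, hij, Option.getD_some])
  have filled {l : Fin n} (h : (A i l).getD 0 ≠ 0) :
      l ∈ univ.filter fun l => (A i l).isSome := by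
    rw [mem_filter, eq_some_getD_of_getD_ne h]
    exact ⟨mem_univ l, rfl⟩
  rw [mem_insert, mem_singleton, not_or] at hj₃
  rw [← hA.card_row i]
  exact two_lt_card.2 ⟨j, filled (by simpa [hij] using hx), j₂, filled hne₂, j₃, filled hne₃,
    hjj₂, hj₃.1 ∘ Eq.symm, hj₃.2 ∘ Eq.symm⟩

end HeffterArray

theorem existsUnique_eq_or_eq_neg_of_card_le {ι : Type*} [Fintype ι] {N : ℕ}
    {f : ι → ZMod (2 * N + 1)} (hcard : Fintype.card ι ≤ N)
    (hf : ∀ y ∈ Set.Icc 1 N, ∃ p, f p = (y : ZMod (2 * N + 1)) ∨ f p = -(y : ZMod (2 * N + 1)))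
    {x : ZMod (2 * N + 1)} (hx : x ≠ 0) : ∃! p, f p = x ∨ f p = -x := by
  let absVal (p : ι) : ℕ := (f p).valMinAbs.natAbs
  have hsurj : ∀ y ∈ Set.Icc 1 N, ∃ p, absVal p = y := by
    intro y hy
    obtain ⟨p, hp⟩ := hf y hy
    refine ⟨p, (ZMod.natAbs_valMinAbs_eq_natAbs_valMinAbs.2 hp).trans ?_⟩
    rw [ZMod.valMinAbs_natCast_of_le_half (by have := hy.2; omega), Int.natAbs_natCast]
  have hinj : Function.Injective absVal := by
    rw [← Set.injOn_univ, ← coe_univ]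
    refine injOn_of_card_image_eq (card_image_le.antisymm ?_)
    calc (univ : Finset ι).card ≤ (Icc 1 N).card := by simpa using hcard
      _ ≤ (univ.image absVal).card := card_le_card fun y hy => by
        simpa using hsurj y (by simpa using hy)
  have hx_mem : x.valMinAbs.natAbs ∈ Set.Icc 1 N := by
    have hpos := Int.natAbs_pos.2 (mt (ZMod.valMinAbs_eq_zero x).1 hx)
    have hle := ZMod.natAbs_valMinAbs_le x
    exact ⟨hpos, by omega⟩
  obtain ⟨p, hp⟩ := hsurj _ hx_mem
  simp only [← ZMod.natAbs_valMinAbs_eq_natAbs_valMinAbs]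
  exact ⟨p, hp, fun p' hp' => hinj (hp'.trans hp.symm)⟩

/-! ### Arrays filled along cyclic diagonals -/

section Band

open scoped Fin.CommRing

variable {R : Type*} {n : ℕ} [NeZero n] {k l : ℕ}

/-- A family of `k` cyclic diagonals of an `n × n` array, `D d i` being the entry in the cell
`(i, i + d)`, such that all rows and all columns sum to zero. -/
structure IsZeroSumBand [AddCommMonoid R] (D : Fin k → Fin n → R) : Prop where
  sum_row : ∀ i, ∑ d, D d i = 0
  sum_col : ∀ j, ∑ d : Fin k, D d (j - (d : ℕ)) = 0

theorem IsZeroSumBand.map {S : Type*} [AddCommMonoid R] [AddCommMonoid S] {D : Fin k → Fin n → R}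
    (hD : IsZeroSumBand D) (φ : R →+ S) : IsZeroSumBand fun d i => φ (D d i) where
  sum_row i := by rw [← map_sum, hD.sum_row, map_zero]
  sum_col j := by rw [← map_sum, hD.sum_col, map_zero]

theorem IsZeroSumBand.append [AddCommMonoid R] {D : Fin k → Fin n → R} {D' : Fin l → Fin n → R}
    (hD : IsZeroSumBand D) (hD' : IsZeroSumBand D') :
    IsZeroSumBand (Fin.append D fun d i => D' d (i + (k : ℕ))) where
  sum_row i := by simp [Fin.sum_univ_add, hD.sum_row, hD'.sum_row]
  sum_col j := by
    have shift (d : Fin l) : j - ((k : Fin n) + (d : ℕ)) + k = j - (d : ℕ) := by abel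
    simp [Fin.sum_univ_add, hD.sum_col, hD'.sum_col, shift]

/-- The partially filled array whose cell `(i, i + d)` holds `D d i` for `d < k`. -/
def bandArray (D : Fin k → Fin n → R) (i j : Fin n) : Option R :=
  if h : (j - i).val < k then some (D ⟨(j - i).val, h⟩ i) else none

theorem natCast_injective_of_le (hk : k ≤ n) :
    Function.Injective fun d : Fin k => ((d : ℕ) : Fin n) := by
  intro d d' h
  have hval : (d : ℕ) % n = d' % n := by simpa [Fin.ext_iff] using h
  rw [Nat.mod_eq_of_lt (d.2.trans_le hk), Nat.mod_eq_of_lt (d'.2.trans_le hk)] at hval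
  exact Fin.ext hval

theorem bandArray_eq_some_iff (hk : k ≤ n) {D : Fin k → Fin n → R} {i j : Fin n} {x : R} :
    bandArray D i j = some x ↔ ∃ d : Fin k, i + (d : ℕ) = j ∧ D d i = x := by
  constructor
  · intro h
    unfold bandArray at h
    split_ifs at h with hlt
    exact ⟨⟨(j - i).val, hlt⟩, by simp, Option.some.inj h⟩
  · rintro ⟨d, rfl, rfl⟩
    have hval : ((d : ℕ) : Fin n).val = d := Fin.val_cast_of_lt (d.2.trans_le hk)
    simp [bandArray, hval]

theorem bandArray_eq_none (hk : k ≤ n) {D : Fin k → Fin n → R} {i j : Fin n}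
    (h : ∀ d : Fin k, i + (d : ℕ) ≠ j) : bandArray D i j = none :=
  Option.eq_none_iff_forall_ne_some.2 fun _ hx =>
    let ⟨d, hd, _⟩ := (bandArray_eq_some_iff hk).1 hx
    h d hd

theorem sum_bandArray_row {S : Type*} [AddCommMonoid S] (hk : k ≤ n) (D : Fin k → Fin n → R)
    {F : Option R → S} (hF : F none = 0) (i : Fin n) :
    ∑ j, F (bandArray D i j) = ∑ d, F (some (D d i)) := by
  refine (Fintype.sum_of_injective (fun d : Fin k => i + (d : ℕ))
    ((add_right_injective i).comp (natCast_injective_of_le hk)) _ _ (fun j hj => ?_)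
    fun d => ?_).symm
  · rw [bandArray_eq_none hk fun d hd => hj ⟨d, hd⟩, hF]
  · rw [(bandArray_eq_some_iff hk).2 ⟨d, rfl, rfl⟩]

theorem sum_bandArray_col {S : Type*} [AddCommMonoid S] (hk : k ≤ n) (D : Fin k → Fin n → R)
    {F : Option R → S} (hF : F none = 0) (j : Fin n) :
    ∑ i, F (bandArray D i j) = ∑ d : Fin k, F (some (D d (j - (d : ℕ)))) := by
  refine (Fintype.sum_of_injective (fun d : Fin k => j - (d : ℕ))
    (sub_right_injective.comp (natCast_injective_of_le hk)) _ _ (fun i hi => ?_)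
    fun d => ?_).symm
  · rw [bandArray_eq_none hk fun d hd => hi ⟨d, sub_eq_of_eq_add hd.symm⟩, hF]
  · rw [(bandArray_eq_some_iff hk).2 ⟨d, sub_add_cancel j _, rfl⟩]

theorem existsUnique_bandArray_eq_or_eq_neg [AddCommGroup R] (hk : k ≤ n)
    {D : Fin k → Fin n → R} {x : R}
    (hx : ∃! p : Fin k × Fin n, D p.1 p.2 = x ∨ D p.1 p.2 = -x) :
    ∃! p : Fin n × Fin n, bandArray D p.1 p.2 = some x ∨ bandArray D p.1 p.2 = some (-x) := by
  simp only [bandArray_eq_some_iff hk, ← exists_or, ← and_or_left]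
  obtain ⟨⟨d, i⟩, hdi, huniq⟩ := hx
  refine ⟨(i, i + (d : ℕ)), ⟨d, rfl, hdi⟩, ?_⟩
  rintro ⟨i', j'⟩ ⟨d', hj', hdi'⟩
  obtain ⟨rfl, rfl⟩ := Prod.mk.inj (huniq (d', i') hdi')
  exact Prod.ext rfl hj'.symm

theorem IsZeroSumBand.isHeffterArray_bandArray [AddCommGroup R] (hk : k ≤ n)
    {D : Fin k → Fin n → R} (hD : IsZeroSumBand D)
    (hhalf : ∀ x : R, x ≠ 0 → ∃! p : Fin k × Fin n, D p.1 p.2 = x ∨ D p.1 p.2 = -x) :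
    IsHeffterArray k (bandArray D) where
  card_row i := by
    rw [card_filter, sum_bandArray_row hk D (F := fun o => if o.isSome then 1 else 0) rfl]
    simp
  card_col j := by
    rw [card_filter, sum_bandArray_col hk D (F := fun o => if o.isSome then 1 else 0) rfl]
    simp
  sum_row i := (sum_bandArray_row hk D (F := (·.getD 0)) rfl i).trans (hD.sum_row i)
  sum_col j := (sum_bandArray_col hk D (F := (·.getD 0)) rfl j).trans (hD.sum_col j)
  existsUnique_cell x hx := existsUnique_bandArray_eq_or_eq_neg hk (hhalf x hx)

theorem isZeroSumBand_three [AddCommGroup R] (b : Fin n → R) (K : R) :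
    IsZeroSumBand ![fun i => b i, fun i => -(b i + b (i + 1) + K), fun i => b (i + 1) + K] where
  sum_row i := by
    simp only [Fin.sum_univ_three, Matrix.cons_val]
    abel
  sum_col j := calc
    _ = b j + -(b (j - 1) + b (j - 1 + 1) + K) + (b (j - 2 + 1) + K) := by
      simp [Fin.sum_univ_three]
    _ = 0 := by
      rw [show j - 2 + 1 = j - 1 by ring, sub_add_cancel]
      abel

theorem isZeroSumBand_four [AddCommGroup R] (f : Fin n → R) (a b c : R) :
    IsZeroSumBand ![fun i => a + f i, fun i => -(a + c + f i), fun i => -(b + f (i + 2)),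
      fun i => b + c + f (i + 2)] where
  sum_row i := by
    simp only [Fin.sum_univ_four, Matrix.cons_val]
    abel
  sum_col j := calc
    _ = a + f j + -(a + c + f (j - 1)) + -(b + f (j - 2 + 2)) + (b + c + f (j - 3 + 2)) := by
      simp [Fin.sum_univ_four]
    _ = 0 := by
      rw [show j - 3 + 2 = j - 1 by ring, sub_add_cancel]
      abel

theorem isZeroSumBand_five [AddCommGroup R] (b g : Fin n → R) (K L : R) :
    IsZeroSumBand ![fun i => b i, fun i => -(b i + g (i + 1) - K), fun i => g (i + 1),
      fun i => g (i + 3) - b (i + 3) + L, fun i => -(g (i + 3) - b (i + 3) + L + K)] where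
  sum_row i := by
    simp only [Fin.sum_univ_five, Matrix.cons_val]
    abel
  sum_col j := calc
    _ = b j + -(b (j - 1) + g (j - 1 + 1) - K) + g (j - 2 + 1) +
        (g (j - 3 + 3) - b (j - 3 + 3) + L) + -(g (j - 4 + 3) - b (j - 4 + 3) + L + K) := by
      simp [Fin.sum_univ_five]
    _ = 0 := by
      rw [show j - 2 + 1 = j - 1 by ring, show j - 4 + 3 = j - 1 by ring, sub_add_cancel,
        sub_add_cancel]
      abel

theorem isZeroSumBand_six [AddCommGroup R] (f : Fin n → R) {a a' b b' c c' : R}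
    (h : a + a' + b + b' + c + c' = 0) :
    IsZeroSumBand ![fun i => a + f i, fun i => a' - f i, fun i => b + f (i + 2),
      fun i => b' - f (i + 2), fun i => c - 2 • f (i + 4), fun i => c' + 2 • f (i + 4)] where
  sum_row i := calc
    _ = a + a' + b + b' + c + c' := by
      simp only [Fin.sum_univ_six, Matrix.cons_val]
      abel
    _ = 0 := h
  sum_col j := calc
    _ = (a + f j) + (a' - f (j - 1)) + (b + f (j - 2 + 2)) + (b' - f (j - 3 + 2)) +
        (c - 2 • f (j - 4 + 4)) + (c' + 2 • f (j - 5 + 4)) := by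
      simp [Fin.sum_univ_six]
    _ = a + a' + b + b' + c + c' := by
      rw [show j - 3 + 2 = j - 1 by ring, show j - 5 + 4 = j - 1 by ring, sub_add_cancel,
        sub_add_cancel]
      abel
    _ = 0 := h

/-! ### Covering intervals by bands -/

/-- A form of `z ≡ ± y (mod M)` within linear arithmetic: up to sign, an integer `|z| ≤ M` is
congruent to `|z|` and to `M - |z|`. -/
def AbsModEq (M : ℕ) (z : ℤ) (y : ℕ) : Prop :=
  z.natAbs = y ∨ z.natAbs + y = M

theorem AbsModEq.intCast_eq_or_eq_neg {M : ℕ} {z : ℤ} {y : ℕ} (h : AbsModEq M z y) :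
    (z : ZMod M) = y ∨ (z : ZMod M) = -y := by
  have hy : (z.natAbs : ZMod M) = y ∨ (z.natAbs : ZMod M) = -y :=
    h.imp (congrArg _) fun h => eq_neg_of_add_eq_zero_left (by
      rw [← Nat.cast_add, h, ZMod.natCast_self])
  obtain hz | hz : (z : ZMod M) = z.natAbs ∨ (z : ZMod M) = -z.natAbs := by
    obtain hz | hz := Int.natAbs_eq z
    · exact Or.inl (by rw [hz]; simp)
    · exact Or.inr (by rw [hz]; simp)
  · rwa [hz]
  · rw [hz, neg_inj, neg_eq_iff_eq_neg]
    exact hy.symm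

/-- Some integer zero-sum band of `k` diagonals represents every element of `S` modulo `M`, up to
sign. -/
def BandCovers (M n k : ℕ) [NeZero n] (S : Set ℕ) : Prop :=
  ∃ D : Fin k → Fin n → ℤ, IsZeroSumBand D ∧ ∀ y ∈ S, ∃ d i, AbsModEq M (D d i) y

theorem BandCovers.mono {M : ℕ} {S T : Set ℕ} (h : BandCovers M n k T) (hST : S ⊆ T) :
    BandCovers M n k S :=
  let ⟨D, hD, hcov⟩ := h
  ⟨D, hD, fun y hy => hcov y (hST hy)⟩

theorem BandCovers.append {M : ℕ} {S T : Set ℕ} (hS : BandCovers M n k S)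
    (hT : BandCovers M n l T) : BandCovers M n (k + l) (S ∪ T) := by
  obtain ⟨D, hD, hS⟩ := hS
  obtain ⟨D', hD', hT⟩ := hT
  refine ⟨_, hD.append hD', ?_⟩
  rintro y (hy | hy)
  · obtain ⟨d, i, h⟩ := hS y hy
    exact ⟨Fin.castAdd l d, i, by simpa using h⟩
  · obtain ⟨d, i, h⟩ := hT y hy
    exact ⟨Fin.natAdd k d, i - k, by simpa using h⟩

theorem BandCovers.exists_isHeffterArray (hk : k ≤ n)
    (h : BandCovers (2 * (n * k) + 1) n k (Set.Icc 1 (n * k))) :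
    ∃ A : Fin n → Fin n → Option (ZMod (2 * (n * k) + 1)), IsHeffterArray k A := by
  obtain ⟨D, hD, hcov⟩ := h
  refine ⟨_, (hD.map (Int.castAddHom (ZMod (2 * (n * k) + 1)))).isHeffterArray_bandArray hk
    fun x hx => existsUnique_eq_or_eq_neg_of_card_le (by simp [mul_comm]) (fun y hy => ?_) hx⟩
  obtain ⟨d, i, hdi⟩ := hcov y hy
  exact ⟨(d, i), hdi.intCast_eq_or_eq_neg⟩

theorem bandCovers_four (M a b : ℕ) :
    BandCovers M n 4 (Set.Ico a (a + 2 * n) ∪ Set.Ico b (b + 2 * n)) := by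
  refine ⟨_, isZeroSumBand_four (fun i : Fin n => (i.val : ℤ)) a b n, ?_⟩
  rintro y (⟨hay, hya⟩ | ⟨hby, hyb⟩)
  · rcases lt_or_ge y (a + n) with hy | hy
    · exact ⟨0, ⟨y - a, by omega⟩, Or.inl (by simp only [Matrix.cons_val]; omega)⟩
    · exact ⟨1, ⟨y - (a + n), by omega⟩, Or.inl (by simp only [Matrix.cons_val]; omega)⟩
  · rcases lt_or_ge y (b + n) with hy | hy
    · exact ⟨2, ⟨y - b, by omega⟩ - 2, Or.inl (by
        simp only [Matrix.cons_val, sub_add_cancel]; omega)⟩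
    · exact ⟨3, ⟨y - (b + n), by omega⟩ - 2, Or.inl (by
        simp only [Matrix.cons_val, sub_add_cancel]; omega)⟩

theorem bandCovers_four_mul (M a b m : ℕ) :
    BandCovers M n (4 * m) (Set.Ico a (a + 2 * n * m) ∪ Set.Ico b (b + 2 * n * m)) := by
  induction m with
  | zero => exact ⟨fun _ _ => 0, ⟨by simp, by simp⟩, by simp⟩
  | succ m ih =>
    refine (ih.append (bandCovers_four M (a + 2 * n * m) (b + 2 * n * m))).mono fun y hy => ?_
    simp only [Set.mem_union, Set.mem_Ico, mul_add_one] at hy ⊢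
    omega

/-- Some zero-sum band of `k` diagonals covers `1, …, n * k + 2 * G`, up to sign and modulo
`2 * (n * k + 2 * G) + 1`, apart from two intervals of length `G`. -/
def HasGappedBand (n k G : ℕ) [NeZero n] : Prop :=
  ∃ a b, BandCovers (2 * (n * k + 2 * G) + 1) n k
    {y | 1 ≤ y ∧ y ≤ n * k + 2 * G ∧ (y < a ∨ a + G ≤ y) ∧ (y < b ∨ b + G ≤ y)}

theorem HasGappedBand.bandCovers {m : ℕ} (h : HasGappedBand n k (2 * n * m)) :
    BandCovers (2 * (n * (k + 4 * m)) + 1) n (k + 4 * m) (Set.Icc 1 (n * (k + 4 * m))) := by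
  obtain ⟨a, b, h⟩ := h
  have hN : n * k + 2 * (2 * n * m) = n * (k + 4 * m) := by ring
  rw [hN] at h
  refine (h.append (bandCovers_four_mul _ a b m)).mono fun y hy => ?_
  simp only [Set.mem_Icc, Set.mem_union, Set.mem_Ico, Set.mem_ofPred_eq] at hy ⊢
  omega

theorem hasGappedBand_zero (G : ℕ) : HasGappedBand n 0 G :=
  ⟨1, 1 + G, ![], ⟨by simp, by simp⟩, fun y ⟨_, _, _, _⟩ => by omega⟩

theorem hasGappedBand_six (G : ℕ) : HasGappedBand n 6 G := by
  let N : ℕ := n * 6 + 2 * G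
  refine ⟨4 * n + 1, 4 * n + 1 + G, _, isZeroSumBand_six (fun i : Fin n => (i.val : ℤ))
    (a := 1) (a' := -(N + 1)) (b := n + 1) (b' := N - n) (c := -(2 * n + 2)) (c' := 2 * n + 1)
    (by ring), ?_⟩
  rintro y ⟨hy_pos, hy_le, hgap, hgap'⟩
  obtain hy | hy | hy | hy | hy | hy : y ≤ n ∨ (n < y ∧ y ≤ 2 * n) ∨
      (2 * n < y ∧ y ≤ 4 * n ∧ y % 2 = 0) ∨ (2 * n < y ∧ y ≤ 4 * n ∧ y % 2 = 1) ∨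
      (N < y + 2 * n ∧ y + n ≤ N) ∨ N < y + n := by omega
  · exact ⟨0, ⟨y - 1, by omega⟩, Or.inl (by simp only [Matrix.cons_val]; omega)⟩
  · exact ⟨2, ⟨y - (n + 1), by omega⟩ - 2, Or.inl (by
      simp only [Matrix.cons_val, sub_add_cancel]; omega)⟩
  · exact ⟨4, ⟨(y - (2 * n + 2)) / 2, by omega⟩ - 4, Or.inl (by
      simp only [Matrix.cons_val, sub_add_cancel, two_nsmul]; omega)⟩
  · exact ⟨5, ⟨(y - (2 * n + 1)) / 2, by omega⟩ - 4, Or.inl (by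
      simp only [Matrix.cons_val, sub_add_cancel, two_nsmul]; omega)⟩
  · exact ⟨3, ⟨N - n - y, by omega⟩ - 2, Or.inl (by
      simp only [Matrix.cons_val, sub_add_cancel]; omega)⟩
  · exact ⟨1, ⟨N - y, by omega⟩, Or.inr (by simp only [Matrix.cons_val]; omega)⟩

/-! ### Bands of three and five diagonals -/

/-- The entries, up to sign, of the band of `isZeroSumBand_three` for the sequence
`b 0, …, b (n - 1)`, closed up cyclically. -/
inductive ThreeBandEntry (n : ℕ) (b : ℕ → ℤ) (K : ℤ) : ℤ → Prop
  | value {x : ℕ} (hx : x < n) : ThreeBandEntry n b K (b x)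
  | shifted {x : ℕ} (hx : x < n) : ThreeBandEntry n b K (b x + K)
  | adjacent {x : ℕ} (hx : x + 1 < n) : ThreeBandEntry n b K (b x + b (x + 1) + K)
  | wrap : ThreeBandEntry n b K (b (n - 1) + b 0 + K)

theorem val_mk_add_one {x : ℕ} (hx : x + 1 < n) :
    ((⟨x, by omega⟩ : Fin n) + 1).val = x + 1 := by
  rw [Fin.val_add_one_of_lt' hx]

theorem val_mk_sub_one_add_one :
    ((⟨n - 1, Nat.sub_one_lt (NeZero.ne n)⟩ : Fin n) + 1).val = 0 := by
  rw [Fin.val_add]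
  simp [Nat.sub_add_cancel (NeZero.one_le)]

theorem bandCovers_three {M : ℕ} {S : Set ℕ} (b : ℕ → ℤ) (K : ℤ)
    (hS : ∀ y ∈ S, ∃ z, ThreeBandEntry n b K z ∧ AbsModEq M z y) : BandCovers M n 3 S := by
  refine ⟨_, isZeroSumBand_three (fun i : Fin n => b i) K, fun y hy => ?_⟩
  obtain ⟨z, hz, hzy⟩ := hS y hy
  unfold AbsModEq at hzy ⊢
  cases hz with
  | value hx => exact ⟨0, ⟨_, hx⟩, hzy⟩
  | shifted hx => exact ⟨2, ⟨_, hx⟩ - 1, by simpa using hzy⟩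
  | @adjacent x hx => exact ⟨1, ⟨x, by omega⟩, by
      simpa only [Matrix.cons_val, val_mk_add_one hx, Int.natAbs_neg] using hzy⟩
  | wrap => exact ⟨1, ⟨n - 1, Nat.sub_one_lt (NeZero.ne n)⟩, by
      simpa only [Matrix.cons_val, val_mk_sub_one_add_one, Int.natAbs_neg] using hzy⟩

/-- The entries, up to sign, of the band of `isZeroSumBand_five` for the sequences
`b 0, …, b (n - 1)` and `g 0, …, g (n - 1)`, closed up cyclically. -/
inductive FiveBandEntry (n : ℕ) (b g : ℕ → ℤ) (K L : ℤ) : ℤ → Prop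
  | left {x : ℕ} (hx : x < n) : FiveBandEntry n b g K L (b x)
  | right {x : ℕ} (hx : x < n) : FiveBandEntry n b g K L (g x)
  | adjacent {x : ℕ} (hx : x + 1 < n) : FiveBandEntry n b g K L (b x + g (x + 1) - K)
  | wrap : FiveBandEntry n b g K L (b (n - 1) + g 0 - K)
  | diff {x : ℕ} (hx : x < n) : FiveBandEntry n b g K L (g x - b x + L)
  | shiftedDiff {x : ℕ} (hx : x < n) : FiveBandEntry n b g K L (g x - b x + L + K)

theorem bandCovers_five {M : ℕ} {S : Set ℕ} (b g : ℕ → ℤ) (K L : ℤ)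
    (hS : ∀ y ∈ S, ∃ z, FiveBandEntry n b g K L z ∧ AbsModEq M z y) : BandCovers M n 5 S := by
  refine ⟨_, isZeroSumBand_five (fun i : Fin n => b i) (fun i : Fin n => g i) K L, fun y hy => ?_⟩
  obtain ⟨z, hz, hzy⟩ := hS y hy
  unfold AbsModEq at hzy ⊢
  cases hz with
  | left hx => exact ⟨0, ⟨_, hx⟩, hzy⟩
  | right hx => exact ⟨2, ⟨_, hx⟩ - 1, by simpa using hzy⟩
  | @adjacent x hx => exact ⟨1, ⟨x, by omega⟩, by
      simpa only [Matrix.cons_val, val_mk_add_one hx, Int.natAbs_neg] using hzy⟩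
  | wrap => exact ⟨1, ⟨n - 1, Nat.sub_one_lt (NeZero.ne n)⟩, by
      simpa only [Matrix.cons_val, val_mk_sub_one_add_one, Int.natAbs_neg] using hzy⟩
  | diff hx => exact ⟨3, ⟨_, hx⟩ - 3, by simpa using hzy⟩
  | shiftedDiff hx => exact ⟨4, ⟨_, hx⟩ - 3, by
      simpa only [Matrix.cons_val, sub_add_cancel, Int.natAbs_neg] using hzy⟩

end Band

/-- The sequence `f 0, g 0, f 1, g 1, …`. -/
def interleave (f g : ℕ → ℤ) (x : ℕ) : ℤ :=
  if x % 2 = 0 then f (x / 2) else g (x / 2)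

theorem hasGappedBand_three_of_four_mul (q G : ℕ) [NeZero (4 * q)] :
    HasGappedBand (4 * q) 3 G := by
  let b (x : ℕ) : ℤ :=
    if x < 2 * q then interleave (fun t => 8 * q + 1 + t) (fun t => -11 * q + t) x
    else interleave (fun t => 2 * q + 1 + t) (fun t => -10 * q + t) (x - 2 * q)
  refine ⟨12 * q + 1, 12 * q + 1 + G, bandCovers_three b (3 * q) ?_⟩
  rintro y ⟨hy_pos, hy_le, hgap, hgap'⟩
  obtain h | h | h | h | h | h | h | h | h | h : y < 2 * q ∨ y = 2 * q ∨ (2 * q < y ∧ y ≤ 3 * q) ∨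
      (3 * q < y ∧ y < 5 * q) ∨ y = 5 * q ∨ (5 * q < y ∧ y ≤ 6 * q) ∨ (6 * q < y ∧ y ≤ 8 * q) ∨
      (8 * q < y ∧ y ≤ 9 * q) ∨ (9 * q < y ∧ y ≤ 11 * q) ∨ (11 * q < y ∧ y ≤ 12 * q) := by omega
  · exact ⟨_, .adjacent (x := y - 1) (by omega), by simp only [AbsModEq, b, interleave]; omega⟩
  · exact ⟨_, .wrap, by simp only [AbsModEq, b, interleave, if_true]; omega⟩
  · exact ⟨_, .value (x := 2 * (y - q - 1)) (by omega), by
      simp only [AbsModEq, b, interleave]; omega⟩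
  · exact ⟨_, .adjacent (x := 7 * q - 1 - y) (by omega), by
      simp only [AbsModEq, b, interleave]; omega⟩
  · exact ⟨_, .adjacent (x := 2 * q - 1) (by omega), by simp only [AbsModEq, b, interleave]; omega⟩
  · exact ⟨_, .shifted (x := 2 * (y - 4 * q - 1)) (by omega), by
      simp only [AbsModEq, b, interleave]; omega⟩
  · exact ⟨_, .shifted (x := 2 * (8 * q - y) + 1) (by omega), by
      simp only [AbsModEq, b, interleave]; omega⟩
  · exact ⟨_, .value (x := 2 * (y - 8 * q - 1)) (by omega), by
      simp only [AbsModEq, b, interleave]; omega⟩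
  · exact ⟨_, .value (x := 2 * (11 * q - y) + 1) (by omega), by
      simp only [AbsModEq, b, interleave]; omega⟩
  · exact ⟨_, .shifted (x := 2 * (y - 11 * q - 1)) (by omega), by
      simp only [AbsModEq, b, interleave]; omega⟩

theorem hasGappedBand_three_of_four_mul_add_one {q : ℕ} (hq : 0 < q) (G : ℕ) [NeZero (4 * q + 1)] :
    HasGappedBand (4 * q + 1) 3 G := by
  let b (x : ℕ) : ℤ :=
    if x < 2 * q then interleave (fun t => 6 * q + 2 + t) (fun t => 10 * q + 4 + t) x
    else interleave (fun t => 9 * q + 3 - t) (fun t => 5 * q + 1 - t) (x - 2 * q)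
  refine ⟨12 * q + 4, 12 * q + 4 + G, bandCovers_three b (-16 * q - 5) ?_⟩
  rintro y ⟨hy_pos, hy_le, hgap, hgap'⟩
  obtain h | h | h | h | h | h | h | h | h | h | h : (y ≠ 2 * q ∧ y ≤ 4 * q) ∨ y = 2 * q ∨
      y = 4 * q + 1 ∨ (4 * q + 1 < y ∧ y ≤ 5 * q + 1) ∨ (5 * q + 1 < y ∧ y ≤ 6 * q + 1) ∨
      (6 * q + 1 < y ∧ y ≤ 7 * q + 1) ∨ (7 * q + 1 < y ∧ y ≤ 8 * q + 2) ∨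
      (8 * q + 2 < y ∧ y ≤ 9 * q + 3) ∨ (9 * q + 3 < y ∧ y ≤ 10 * q + 3) ∨
      (10 * q + 3 < y ∧ y ≤ 11 * q + 3) ∨ (11 * q + 3 < y ∧ y ≤ 12 * q + 3) := by omega
  · exact ⟨_, .adjacent (x := y - 1) (by omega), by simp only [AbsModEq, b, interleave]; omega⟩
  · exact ⟨_, .wrap, by simp only [AbsModEq, b, interleave, if_true]; omega⟩
  · exact ⟨_, .adjacent (x := 2 * q - 1) (by omega), by simp only [AbsModEq, b, interleave]; omega⟩
  · exact ⟨_, .value (x := 2 * (6 * q + 1 - y) + 1) (by omega), by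
      simp only [AbsModEq, b, interleave]; omega⟩
  · exact ⟨_, .shifted (x := 2 * (6 * q + 1 - y) + 1) (by omega), by
      simp only [AbsModEq, b, interleave]; omega⟩
  · exact ⟨_, .value (x := 2 * (y - 6 * q - 2)) (by omega), by
      simp only [AbsModEq, b, interleave]; omega⟩
  · exact ⟨_, .shifted (x := 2 * (y - 6 * q - 2)) (by omega), by
      simp only [AbsModEq, b, interleave]; omega⟩
  · exact ⟨_, .value (x := 2 * (10 * q + 3 - y)) (by omega), by
      simp only [AbsModEq, b, interleave]; omega⟩
  · exact ⟨_, .shifted (x := 2 * (10 * q + 3 - y)) (by omega), by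
      simp only [AbsModEq, b, interleave]; omega⟩
  · exact ⟨_, .value (x := 2 * (y - 10 * q - 4) + 1) (by omega), by
      simp only [AbsModEq, b, interleave]; omega⟩
  · exact ⟨_, .shifted (x := 2 * (y - 10 * q - 4) + 1) (by omega), by
      simp only [AbsModEq, b, interleave]; omega⟩

theorem hasGappedBand_three_of_four_mul_add_two {q : ℕ} (hq : 0 < q) (G : ℕ) [NeZero (4 * q + 2)] :
    HasGappedBand (4 * q + 2) 3 G := by
  let b (x : ℕ) : ℤ :=
    if x < 2 * q + 1 then
      interleave (fun t => 8 * q + 4 + 2 * G + t) (fun t => -8 * q - 3 - G + t) x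
    else if x < 4 * q + 1 then
      interleave (fun t => -5 * q - 3 - G - t) (fun t => 11 * q + 5 + 2 * G - t) (x - (2 * q + 1))
    else 6 * q + 3 + G
  refine ⟨4 * q + 2, 8 * q + 4 + G, bandCovers_three b (-4 * q - 2 - G) ?_⟩
  rintro y ⟨hy_pos, hy_le, hgap, hgap'⟩
  obtain h | h | h | h | h | h | h | h | h | h | h | h | h | h : y = 1 ∨
      (y ≠ 1 ∧ y ≠ 2 * q + 1 ∧ y ≤ 4 * q + 1) ∨ y = 2 * q + 1 ∨
      (4 * q + 2 + G ≤ y ∧ y ≤ 5 * q + 2 + G) ∨ (5 * q + 2 + G < y ∧ y < 6 * q + 3 + G) ∨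
      y = 6 * q + 3 + G ∨ (6 * q + 3 + G < y ∧ y ≤ 7 * q + 3 + G) ∨
      (7 * q + 3 + G < y ∧ y < 8 * q + 4 + G) ∨ (8 * q + 4 + 2 * G ≤ y ∧ y ≤ 9 * q + 4 + 2 * G) ∨
      (9 * q + 4 + 2 * G < y ∧ y < 10 * q + 5 + 2 * G) ∨ y = 10 * q + 5 + 2 * G ∨
      (10 * q + 5 + 2 * G < y ∧ y ≤ 11 * q + 5 + 2 * G) ∨
      (11 * q + 5 + 2 * G < y ∧ y < 12 * q + 6 + 2 * G) ∨ y = 12 * q + 6 + 2 * G := by omega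
  · exact ⟨_, .adjacent (x := 2 * q) (by omega), by simp only [AbsModEq, b, interleave]; omega⟩
  · exact ⟨_, .adjacent (x := 4 * q + 1 - y) (by omega), by
      simp only [AbsModEq, b, interleave]; omega⟩
  · exact ⟨_, .shifted (x := 4 * q + 1) (by omega), by simp only [AbsModEq, b, interleave]; omega⟩
  · exact ⟨_, .shifted (x := 2 * (y - 4 * q - 2 - G)) (by omega), by
      simp only [AbsModEq, b, interleave]; omega⟩
  · exact ⟨_, .value (x := 2 * (y - 4 * q - 3 - G) + 1) (by omega), by
      simp only [AbsModEq, b, interleave]; omega⟩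
  · exact ⟨_, .value (x := 4 * q + 1) (by omega), by simp only [AbsModEq, b, interleave]; omega⟩
  · exact ⟨_, .shifted (x := 2 * (8 * q + 4 + G - y)) (by omega), by
      simp only [AbsModEq, b, interleave]; omega⟩
  · exact ⟨_, .value (x := 2 * (8 * q + 3 + G - y) + 1) (by omega), by
      simp only [AbsModEq, b, interleave]; omega⟩
  · exact ⟨_, .value (x := 2 * (y - 8 * q - 4 - 2 * G)) (by omega), by
      simp only [AbsModEq, b, interleave]; omega⟩
  · exact ⟨_, .shifted (x := 2 * (y - 8 * q - 5 - 2 * G) + 1) (by omega), by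
      simp only [AbsModEq, b, interleave]; omega⟩
  · exact ⟨_, .wrap, by simp only [AbsModEq, b, interleave, if_true]; omega⟩
  · exact ⟨_, .value (x := 2 * (12 * q + 6 + 2 * G - y)) (by omega), by
      simp only [AbsModEq, b, interleave]; omega⟩
  · exact ⟨_, .shifted (x := 2 * (12 * q + 5 + 2 * G - y) + 1) (by omega), by
      simp only [AbsModEq, b, interleave]; omega⟩
  · exact ⟨_, .adjacent (x := 4 * q) (by omega), by simp only [AbsModEq, b, interleave]; omega⟩

theorem hasGappedBand_three_of_four_mul_add_three (q G : ℕ) [NeZero (4 * q + 3)] :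
    HasGappedBand (4 * q + 3) 3 G := by
  let b (x : ℕ) : ℤ :=
    if x < 2 * q + 2 then
      interleave (fun t => 8 * q + 7 + 2 * G + t) (fun t => -8 * q - 5 + t) x
    else interleave (fun t => -5 * q - 4 - t) (fun t => 11 * q + 8 + 2 * G - t) (x - (2 * q + 2))
  refine ⟨8 * q + 6, 8 * q + 6 + G, bandCovers_three b (-4 * q - 4 - 2 * G) ?_⟩
  rintro y ⟨hy_pos, hy_le, hgap, hgap'⟩
  obtain h | h | h | h | h | h | h | h | h | h | h : (y ≠ 2 * q + 1 ∧ y ≤ 4 * q + 2) ∨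
      y = 2 * q + 1 ∨ (4 * q + 2 < y ∧ y ≤ 5 * q + 3) ∨ (5 * q + 3 < y ∧ y ≤ 6 * q + 4) ∨
      (6 * q + 4 < y ∧ y ≤ 7 * q + 4) ∨ (7 * q + 4 < y ∧ y < 8 * q + 6) ∨ y = 8 * q + 6 + 2 * G ∨
      (8 * q + 6 + 2 * G < y ∧ y ≤ 9 * q + 7 + 2 * G) ∨
      (9 * q + 7 + 2 * G < y ∧ y ≤ 10 * q + 8 + 2 * G) ∨
      (10 * q + 8 + 2 * G < y ∧ y ≤ 11 * q + 8 + 2 * G) ∨ 11 * q + 8 + 2 * G < y := by omega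
  · exact ⟨_, .adjacent (x := 4 * q + 2 - y) (by omega), by
      simp only [AbsModEq, b, interleave]; omega⟩
  · exact ⟨_, .wrap, by simp only [AbsModEq, b, interleave, if_true]; omega⟩
  · exact ⟨_, .shifted (x := 2 * (y - 4 * q - 3)) (by omega), by
      simp only [AbsModEq, b, interleave]; omega⟩
  · exact ⟨_, .value (x := 2 * (y - 4 * q - 3)) (by omega), by
      simp only [AbsModEq, b, interleave]; omega⟩
  · exact ⟨_, .shifted (x := 2 * (8 * q + 5 - y) + 1) (by omega), by
      simp only [AbsModEq, b, interleave]; omega⟩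
  · exact ⟨_, .value (x := 2 * (8 * q + 5 - y) + 1) (by omega), by
      simp only [AbsModEq, b, interleave]; omega⟩
  · exact ⟨_, .adjacent (x := 2 * q + 1) (by omega), by simp only [AbsModEq, b, interleave]; omega⟩
  · exact ⟨_, .value (x := 2 * (y - 8 * q - 7 - 2 * G)) (by omega), by
      simp only [AbsModEq, b, interleave]; omega⟩
  · exact ⟨_, .shifted (x := 2 * (y - 8 * q - 7 - 2 * G)) (by omega), by
      simp only [AbsModEq, b, interleave]; omega⟩
  · exact ⟨_, .value (x := 2 * (12 * q + 9 + 2 * G - y) + 1) (by omega), by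
      simp only [AbsModEq, b, interleave]; omega⟩
  · exact ⟨_, .shifted (x := 2 * (12 * q + 9 + 2 * G - y) + 1) (by omega), by
      simp only [AbsModEq, b, interleave]; omega⟩

theorem hasGappedBand_five_of_two_mul (p G : ℕ) [NeZero (2 * p)] :
    HasGappedBand (2 * p) 5 G := by
  let b : ℕ → ℤ := interleave (fun t => 7 * p + 1 + 2 * G + t) (fun t => -2 * p - 2 - t)
  let g : ℕ → ℤ := interleave (fun t => 4 * p + 2 + 2 * t) (fun t => 6 * p - 1 - 2 * t)
  refine ⟨6 * p + 1, 6 * p + 1 + G, bandCovers_five b g (-p) (2 * p + 2 * G - 1) ?_⟩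
  rintro y ⟨hy_pos, hy_le, hgap, hgap'⟩
  obtain h | h | h | h | h | h | h | h | h | h | h : y ≤ p ∨ (p < y ∧ y ≤ 2 * p) ∨ y = 2 * p + 1 ∨
      (2 * p + 1 < y ∧ y ≤ 3 * p + 1) ∨ (3 * p + 1 < y ∧ y ≤ 4 * p) ∨
      (4 * p < y ∧ y ≤ 6 * p ∧ y % 2 = 1) ∨ (4 * p < y ∧ y ≤ 6 * p ∧ y % 2 = 0) ∨
      (6 * p + 2 * G < y ∧ y ≤ 7 * p + 2 * G) ∨ (7 * p + 2 * G < y ∧ y ≤ 8 * p + 2 * G) ∨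
      (8 * p + 2 * G < y ∧ y ≤ 9 * p + 2 * G) ∨ 9 * p + 2 * G < y := by omega
  · exact ⟨_, .diff (x := 2 * (p - y)) (by omega), by simp only [AbsModEq, b, g, interleave]; omega⟩
  · exact ⟨_, .shiftedDiff (x := 2 * (2 * p - y)) (by omega), by
      simp only [AbsModEq, b, g, interleave]; omega⟩
  · exact ⟨_, .wrap, by simp only [AbsModEq, b, g, interleave, if_true]; omega⟩
  · exact ⟨_, .left (x := 2 * (y - 2 * p - 2) + 1) (by omega), by
      simp only [AbsModEq, b, interleave]; omega⟩
  · exact ⟨_, .adjacent (x := 2 * (y - 3 * p - 2) + 1) (by omega), by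
      simp only [AbsModEq, b, g, interleave]; omega⟩
  · exact ⟨_, .right (x := 6 * p - y) (by omega), by simp only [AbsModEq, g, interleave]; omega⟩
  · exact ⟨_, .right (x := y - 4 * p - 2) (by omega), by simp only [AbsModEq, g, interleave]; omega⟩
  · exact ⟨_, .adjacent (x := 2 * (y - 6 * p - 1 - 2 * G)) (by omega), by
      simp only [AbsModEq, b, g, interleave]; omega⟩
  · exact ⟨_, .left (x := 2 * (y - 7 * p - 1 - 2 * G)) (by omega), by
      simp only [AbsModEq, b, interleave]; omega⟩
  · exact ⟨_, .shiftedDiff (x := 2 * (9 * p + 2 * G - y) + 1) (by omega), by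
      simp only [AbsModEq, b, g, interleave]; omega⟩
  · exact ⟨_, .diff (x := 2 * (10 * p + 2 * G - y) + 1) (by omega), by
      simp only [AbsModEq, b, g, interleave]; omega⟩

theorem hasGappedBand_five_of_two_mul_add_one {p : ℕ} (hp : 0 < p) (G : ℕ) [NeZero (2 * p + 1)] :
    HasGappedBand (2 * p + 1) 5 G := by
  let b (x : ℕ) : ℤ :=
    if x < 2 * p then
      interleave (fun t => t - (5 * p + 3 + 2 * G)) (fun t => -(6 * p + 5 + 2 * G) - t) x
    else -(6 * p + 4 + 2 * G)
  let g (x : ℕ) : ℤ :=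
    if x < 2 * p then
      interleave (fun t => 2 * p + 3 + 2 * G + 2 * t) (fun t => 4 * p + 2 + 2 * G - 2 * t) x
    else 2 * p + 2 + 2 * G
  refine ⟨2 * p + 2, 2 * p + 2 + G,
    bandCovers_five b g (-9 * p - 5 - 2 * G) (-9 * p - 7 - 4 * G) ?_⟩
  rintro y ⟨hy_pos, hy_le, hgap, hgap'⟩
  obtain h | h | h | h | h | h | h | h | h | h | h | h | h | h | h | h : y ≤ p ∨ y = p + 1 ∨
      (p + 1 < y ∧ y < 2 * p + 2) ∨ y = 2 * p + 2 + 2 * G ∨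
      (2 * p + 2 + 2 * G < y ∧ y ≤ 4 * p + 2 + 2 * G ∧ y % 2 = 1) ∨
      (2 * p + 2 + 2 * G < y ∧ y ≤ 4 * p + 2 + 2 * G ∧ y % 2 = 0) ∨ y = 4 * p + 3 + 2 * G ∨
      (4 * p + 3 + 2 * G < y ∧ y ≤ 5 * p + 3 + 2 * G) ∨ y = 5 * p + 4 + 2 * G ∨
      (5 * p + 4 + 2 * G < y ∧ y ≤ 6 * p + 3 + 2 * G) ∨ y = 6 * p + 4 + 2 * G ∨
      (6 * p + 4 + 2 * G < y ∧ y ≤ 7 * p + 4 + 2 * G) ∨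
      (7 * p + 4 + 2 * G < y ∧ y ≤ 8 * p + 4 + 2 * G) ∨
      (8 * p + 4 + 2 * G < y ∧ y ≤ 9 * p + 4 + 2 * G) ∨
      (9 * p + 4 + 2 * G < y ∧ y ≤ 10 * p + 4 + 2 * G) ∨ y = 10 * p + 5 + 2 * G := by omega
  · exact ⟨_, .diff (x := 2 * (p - y) + 1) (by omega), by
      simp only [AbsModEq, b, g, interleave]; omega⟩
  · exact ⟨_, .diff (x := 2 * p) (by omega), by simp only [AbsModEq, b, g, interleave]; omega⟩
  · exact ⟨_, .diff (x := 2 * (2 * p + 1 - y)) (by omega), by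
      simp only [AbsModEq, b, g, interleave]; omega⟩
  · exact ⟨_, .right (x := 2 * p) (by omega), by simp only [AbsModEq, g, interleave]; omega⟩
  · exact ⟨_, .right (x := y - 2 * p - 3 - 2 * G) (by omega), by
      simp only [AbsModEq, g, interleave]; omega⟩
  · exact ⟨_, .right (x := 4 * p + 3 + 2 * G - y) (by omega), by
      simp only [AbsModEq, g, interleave]; omega⟩
  · exact ⟨_, .adjacent (x := 2 * p - 1) (by omega), by
      simp only [AbsModEq, b, g, interleave]; omega⟩
  · exact ⟨_, .left (x := 2 * (5 * p + 3 + 2 * G - y)) (by omega), by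
      simp only [AbsModEq, b, interleave]; omega⟩
  · exact ⟨_, .wrap, by simp only [AbsModEq, b, g, interleave, if_true]; omega⟩
  · exact ⟨_, .adjacent (x := 2 * (y - 5 * p - 5 - 2 * G) + 1) (by omega), by
      simp only [AbsModEq, b, g, interleave]; omega⟩
  · exact ⟨_, .left (x := 2 * p) (by omega), by simp only [AbsModEq, b, interleave]; omega⟩
  · exact ⟨_, .left (x := 2 * (y - 6 * p - 5 - 2 * G) + 1) (by omega), by
      simp only [AbsModEq, b, interleave]; omega⟩
  · exact ⟨_, .adjacent (x := 2 * (8 * p + 4 + 2 * G - y)) (by omega), by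
      simp only [AbsModEq, b, g, interleave]; omega⟩
  · exact ⟨_, .shiftedDiff (x := 2 * (y - 8 * p - 5 - 2 * G) + 1) (by omega), by
      simp only [AbsModEq, b, g, interleave]; omega⟩
  · exact ⟨_, .shiftedDiff (x := 2 * (y - 9 * p - 5 - 2 * G)) (by omega), by
      simp only [AbsModEq, b, g, interleave]; omega⟩
  · exact ⟨_, .shiftedDiff (x := 2 * p) (by omega), by
      simp only [AbsModEq, b, g, interleave]; omega⟩

theorem hasGappedBand_three {n : ℕ} [NeZero n] (hn : 3 ≤ n) (G : ℕ) : HasGappedBand n 3 G := by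
  obtain ⟨q, rfl | rfl | rfl | rfl⟩ :
      ∃ q, n = 4 * q ∨ n = 4 * q + 1 ∨ n = 4 * q + 2 ∨ n = 4 * q + 3 := ⟨n / 4, by omega⟩
  · exact hasGappedBand_three_of_four_mul q G
  · exact hasGappedBand_three_of_four_mul_add_one (by omega) G
  · exact hasGappedBand_three_of_four_mul_add_two (by omega) G
  · exact hasGappedBand_three_of_four_mul_add_three q G

theorem hasGappedBand_five {n : ℕ} [NeZero n] (hn : 2 ≤ n) (G : ℕ) : HasGappedBand n 5 G := by
  obtain ⟨p, rfl | rfl⟩ := Nat.even_or_odd' n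
  · exact hasGappedBand_five_of_two_mul p G
  · exact hasGappedBand_five_of_two_mul_add_one (by omega) G

theorem exists_isHeffterArray {n k : ℕ} (hk : 3 ≤ k) (hkn : k ≤ n) :
    ∃ A : Fin n → Fin n → Option (ZMod (2 * n * k + 1)), IsHeffterArray k A := by
  have : NeZero n := ⟨by omega⟩
  rw [mul_assoc]
  suffices ∃ k₀ m, k = k₀ + 4 * m ∧ HasGappedBand n k₀ (2 * n * m) by
    obtain ⟨k₀, m, rfl, hgapped⟩ := this
    exact hgapped.bandCovers.exists_isHeffterArray hkn
  obtain ⟨m, rfl | rfl | rfl | rfl⟩ :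
      ∃ m, k = 0 + 4 * m ∨ k = 5 + 4 * m ∨ k = 6 + 4 * m ∨ k = 3 + 4 * m :=
    ⟨if k % 4 = 1 ∨ k % 4 = 2 then k / 4 - 1 else k / 4, by split <;> omega⟩
  · exact ⟨0, m, rfl, hasGappedBand_zero _⟩
  · exact ⟨5, m, rfl, hasGappedBand_five (by omega) _⟩
  · exact ⟨6, m, rfl, hasGappedBand_six _⟩
  · exact ⟨3, m, rfl, hasGappedBand_three (by omega) _⟩

/-- There exists a Heffter array `H(n;k)` if and only if `3 ≤ k ≤ n`. -/
theorem heffter_array_square_exists_iff (n k : ℕ) (hn : 0 < n) (hk : 0 < k) :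
    (∃ A : Fin n → Fin n → Option (ZMod (2 * n * k + 1)),
      (∀ i : Fin n, (Finset.univ.filter fun j : Fin n => (A i j).isSome).card = k) ∧
      (∀ j : Fin n, (Finset.univ.filter fun i : Fin n => (A i j).isSome).card = k) ∧
      (∀ i : Fin n, ∑ j : Fin n, (A i j).getD 0 = 0) ∧
      (∀ j : Fin n, ∑ i : Fin n, (A i j).getD 0 = 0) ∧
      (∀ x : ZMod (2 * n * k + 1), x ≠ 0 →
        ∃! p : Fin n × Fin n, A p.1 p.2 = some x ∨ A p.1 p.2 = some (-x)))
    ↔ (3 ≤ k ∧ k ≤ n) := by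
  constructor
  · rintro ⟨A, hrow, hcol, hsum_row, hsum_col, hcell⟩
    have hA : IsHeffterArray k A := ⟨hrow, hcol, hsum_row, hsum_col, hcell⟩
    have : Nontrivial (ZMod (2 * n * k + 1)) := ZMod.nontrivial_iff.2 (by simp [hn.ne', hk.ne'])
    exact ⟨hA.three_le, hA.le ⟨0, hn⟩⟩
  · rintro ⟨hk_ge, hkn⟩
    obtain ⟨A, hA⟩ := exists_isHeffterArray hk_ge hkn
    exact ⟨A, hA.card_row, hA.card_col, hA.sum_row, hA.sum_col, hA.existsUnique_cell⟩
end

section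
/- Let p be an odd prime and let r be an element of ZMod p with r ≠ 0 and r ≠ 1. Define f : ZMod p → ZMod p → ZMod p by f(i,j) = j + (i - j) * r⁻¹. Then for all i, j, k ∈ ZMod p, f(f(i,j), k) = f(i, f(j,k)) if and only if i = k. -/
/-- The entry `H_{p,r}[i,j] = j + (i - j) * r⁻¹` of the array `H_{p,r}`. -/
def Hpr {p : ℕ} (r : ZMod p) (i j : ZMod p) : ZMod p := j + (i - j) * r⁻¹

theorem assoc_iff_eq_of_right_self_distrib {α : Type*} {f : α → α → α}
    (self_distrib : ∀ i j k, f (f i j) k = f (f i k) (f j k)) (idem : ∀ i, f i i = i)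
    (left_cancel : ∀ i, (f i).Injective) (right_cancel : ∀ j, (f · j).Injective) (i j k : α) :
    f (f i j) k = f i (f j k) ↔ i = k :=
  calc f (f i j) k = f i (f j k)
    _ ↔ f (f i k) (f j k) = f i (f j k) := by rw [self_distrib]
    _ ↔ f i k = i := (right_cancel (f j k)).eq_iff
    _ ↔ f i k = f i i := by rw [idem]
    _ ↔ k = i := (left_cancel i).eq_iff
    _ ↔ i = k := eq_comm

section Hpr

variable {n : ℕ} {r : ZMod n}

theorem Hpr_self (r i : ZMod n) : Hpr r i i = i := by
  simp [Hpr]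

theorem Hpr_right_self_distrib (r i j k : ZMod n) :
    Hpr r (Hpr r i j) k = Hpr r (Hpr r i k) (Hpr r j k) := by
  simp only [Hpr]
  ring

theorem Hpr_left_injective (hr : IsUnit r) (j : ZMod n) : (Hpr r · j).Injective := by
  have inv_mul : r⁻¹ * r = 1 := ZMod.inv_mul_of_unit r hr
  intro i i' (h : j + (i - j) * r⁻¹ = j + (i' - j) * r⁻¹)
  linear_combination r * h - (i - i') * inv_mul

theorem Hpr_right_injective (hr : IsUnit r) (hr_sub_one : IsRegular (r - 1)) (i : ZMod n) :
    (Hpr r i).Injective := by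
  have inv_mul : r⁻¹ * r = 1 := ZMod.inv_mul_of_unit r hr
  intro j j' (h : j + (i - j) * r⁻¹ = j' + (i - j') * r⁻¹)
  apply hr_sub_one.left
  linear_combination r * h + (j - j') * inv_mul

theorem Hpr_assoc_iff_general (hr : IsUnit r) (hr_sub_one : IsRegular (r - 1)) (i j k : ZMod n) :
    Hpr r (Hpr r i j) k = Hpr r i (Hpr r j k) ↔ i = k :=
  assoc_iff_eq_of_right_self_distrib (Hpr_right_self_distrib r) (Hpr_self r)
    (Hpr_right_injective hr hr_sub_one) (Hpr_left_injective hr) i j k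

end Hpr

/-- For an odd prime `p` and `r ∈ ZMod p` with `r ≠ 0`, `r ≠ 1`, the operation
`f(i,j) = j + (i - j) * r⁻¹` associates on `(i,j,k)` if and only if `i = k`. -/
theorem Hpr_assoc_iff (p : ℕ) (hp : p.Prime) (hodd : p ≠ 2) (r : ZMod p)
    (hr0 : r ≠ 0) (hr1 : r ≠ 1) :
    ∀ i j k : ZMod p, Hpr r (Hpr r i j) k = Hpr r i (Hpr r j k) ↔ i = k := by
  have : Fact p.Prime := ⟨hp⟩
  exact Hpr_assoc_iff_general hr0.isUnit (.of_ne_zero (sub_ne_zero.mpr hr1))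
end

section
/- Let p be an odd prime and let r be an element of ZMod p with r ≠ 0 and r ≠ 1. Define the sequence c : ℕ → ZMod p by c 1 = 0 and c (ℓ+1) = (ℓ : ZMod p) + (c ℓ - (ℓ : ZMod p)) * r⁻¹ for ℓ ≥ 1. Then for every integer ℓ ≥ 1, c ℓ = ((r⁻¹)^(ℓ-1) - 1) * (r - 1)⁻¹ + ((ℓ : ZMod p) - 1). -/
/-!
The recurrence is affine: if `(1 + a) * q = a`, the shift `c ℓ - (ℓ - 1) + a` turns
`c (ℓ + 1) = ℓ + (c ℓ - ℓ) * q` into a geometric progression of ratio `q`. For `q = r⁻¹`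
the fixed point is `a = (r - 1)⁻¹`.
-/

theorem eq_mul_pow_sub_of_succ_eq_mul {M : Type*} [Monoid M] {d : ℕ → M} {q : M} {m : ℕ}
    (hd : ∀ n, m ≤ n → d (n + 1) = d n * q) {n : ℕ} (hmn : m ≤ n) :
    d n = d m * q ^ (n - m) := by
  induction n, hmn using Nat.le_induction with
  | base => simp
  | succ n hmn ih => rw [hd n hmn, ih, mul_assoc, ← pow_succ, Nat.succ_sub hmn]

section Ring

variable {R : Type*} [Ring R]

theorem eq_mul_pow_sub_add_of_affine_recurrence {c : ℕ → R} {q a : R} (ha : (1 + a) * q = a)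
    (hrec : ∀ ℓ : ℕ, 1 ≤ ℓ → c (ℓ + 1) = ℓ + (c ℓ - ℓ) * q) {ℓ : ℕ} (hℓ : 1 ≤ ℓ) :
    c ℓ = (c 1 + a) * q ^ (ℓ - 1) - a + (ℓ - 1) := by
  have shift_succ (n : ℕ) (hn : 1 ≤ n) :
      c (n + 1) - ((n + 1 : ℕ) - 1) + a = (c n - (n - 1) + a) * q :=
    calc c (n + 1) - ((n + 1 : ℕ) - 1) + a
        = (c n - n) * q + a := by rw [hrec n hn]; push_cast; abel
      _ = (c n - n) * q + (1 + a) * q := by rw [ha]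
      _ = (c n - (n - 1) + a) * q := by rw [← add_mul]; congr 1; abel
  have shift_eq : c ℓ - (ℓ - 1) + a = (c 1 + a) * q ^ (ℓ - 1) := by
    simpa using eq_mul_pow_sub_of_succ_eq_mul (d := fun n ↦ c n - (n - 1) + a) shift_succ hℓ
  rw [← shift_eq]
  abel

theorem one_add_inv_mul_inv_of_eq_sub_one {r u : Rˣ} (hu : (u : R) = r - 1) :
    (1 + (↑u⁻¹ : R)) * ↑r⁻¹ = ↑u⁻¹ := by
  have one_add_inv : 1 + (↑u⁻¹ : R) = ↑u⁻¹ * r := by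
    rw [← sub_add_cancel (r : R) 1, ← hu, mul_add, Units.inv_mul, mul_one]
  rw [one_add_inv, Units.mul_inv_cancel_right]

theorem Lpr_partial_sum_formula_general {r u : Rˣ} (hu : (u : R) = r - 1) {c : ℕ → R}
    (hc1 : c 1 = 0) (hrec : ∀ ℓ : ℕ, 1 ≤ ℓ → c (ℓ + 1) = ℓ + (c ℓ - ℓ) * ↑r⁻¹)
    (ℓ : ℕ) (hℓ : 1 ≤ ℓ) :
    c ℓ = ((↑r⁻¹ : R) ^ (ℓ - 1) - 1) * ↑u⁻¹ + (ℓ - 1) := by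
  have commute_u_r : Commute (u : R) r := by
    rw [hu]
    exact (Commute.refl _).sub_left (Commute.one_left _)
  have commute_inv : Commute (↑u⁻¹ : R) ((↑r⁻¹ : R) ^ (ℓ - 1)) :=
    commute_u_r.units_inv_left.units_inv_right.pow_right _
  rw [eq_mul_pow_sub_add_of_affine_recurrence (one_add_inv_mul_inv_of_eq_sub_one hu) hrec hℓ,
    hc1, zero_add, commute_inv.eq, sub_one_mul]

end Ring

/-- Closed formula for the partial natural sums in the loop `L_{p,r}`:
if `c 1 = 0` and `c (ℓ+1) = ℓ + (c ℓ - ℓ) * r⁻¹` for `ℓ ≥ 1`, then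
`c ℓ = ((r⁻¹)^(ℓ-1) - 1) * (r - 1)⁻¹ + (ℓ - 1)` for all `ℓ ≥ 1`. -/
theorem Lpr_partial_sum_formula (p : ℕ) (hp : p.Prime) (hodd : p ≠ 2)
    (r : ZMod p) (hr0 : r ≠ 0) (hr1 : r ≠ 1)
    (c : ℕ → ZMod p) (hc1 : c 1 = 0)
    (hrec : ∀ ℓ : ℕ, 1 ≤ ℓ → c (ℓ + 1) = (ℓ : ZMod p) + (c ℓ - (ℓ : ZMod p)) * r⁻¹) :
    ∀ ℓ : ℕ, 1 ≤ ℓ →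
      c ℓ = ((r⁻¹) ^ (ℓ - 1) - 1) * (r - 1)⁻¹ + ((ℓ : ZMod p) - 1) := by
  have : Fact p.Prime := ⟨hp⟩
  exact Lpr_partial_sum_formula_general (r := .mk0 r hr0) (u := .mk0 (r - 1) (sub_ne_zero.mpr hr1))
    rfl hc1 hrec
end

section
/- Let p be an odd prime and let r be a primitive root modulo p (a generator of the group of units of ZMod p). Define the sequence c : ℕ → ZMod p by c 1 = 0 and c (ℓ+1) = (ℓ : ZMod p) + (c ℓ - (ℓ : ZMod p)) * r⁻¹ for ℓ ≥ 1. Then for every integer ℓ with 1 ≤ ℓ ≤ p-2, one has c ℓ ≠ (ℓ : ZMod p); equivalently, ((r⁻¹)^(ℓ-1) - 1) * (r - 1)⁻¹ + ((ℓ : ZMod p) - 1) = (ℓ : ZMod p) holds only when (p-1) divides ℓ. -/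
/-!
The recursion says that `d ℓ = ℓ - c ℓ` satisfies `d 1 = 1` and `d (ℓ + 1) = d ℓ * r⁻¹ + 1`, so
`d ℓ` is the geometric sum `1 + r⁻¹ + ⋯ + r⁻¹ ^ (ℓ - 1)`. For `r ≠ 1` this sum vanishes exactly
when `r ^ ℓ = 1`, that is, when the order of `r` divides `ℓ`; a primitive root modulo `p` has order
`p - 1`.
-/

open Finset

section Generator

variable {M : Type*} [Monoid M] [Nontrivial Mˣ] {r : M}

theorem ne_one_of_forall_units_exists_pow_eq (hr : ∀ u : Mˣ, ∃ m : ℕ, r ^ m = u) : r ≠ 1 := by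
  rintro rfl
  obtain ⟨u, hu⟩ := exists_ne (1 : Mˣ)
  obtain ⟨m, hm⟩ := hr u
  exact hu (Units.ext (by rw [← hm, one_pow, Units.val_one]))

theorem isUnit_of_forall_units_exists_pow_eq (hr : ∀ u : Mˣ, ∃ m : ℕ, r ^ m = u) : IsUnit r := by
  obtain ⟨u, hu⟩ := exists_ne (1 : Mˣ)
  obtain ⟨m, hm⟩ := hr u
  have hm0 : m ≠ 0 := by
    rintro rfl
    exact hu (Units.ext (by rw [← hm, pow_zero, Units.val_one]))
  exact (isUnit_pow_iff hm0).mp (hm ▸ u.isUnit)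

theorem orderOf_eq_card_units_of_forall_units_exists_pow_eq
    (hr : ∀ u : Mˣ, ∃ m : ℕ, r ^ m = u) : orderOf r = Nat.card Mˣ := by
  obtain ⟨g, rfl⟩ := isUnit_of_forall_units_exists_pow_eq hr
  rw [orderOf_units]
  refine orderOf_eq_card_of_forall_mem_powers fun u => ?_
  obtain ⟨m, hm⟩ := hr u
  exact ⟨m, Units.ext (by simpa using hm)⟩

end Generator

theorem geom_sum_succ_eq_geom_sum_mul_add_one {R : Type*} [Semiring R] (s : R) (n : ℕ) :
    ∑ i ∈ range (n + 1), s ^ i = (∑ i ∈ range n, s ^ i) * s + 1 := by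
  simp only [sum_range_succ', sum_mul, pow_succ, pow_zero]

theorem natCast_sub_eq_geom_sum_of_rec {R : Type*} [Ring R] {s : R} {c : ℕ → R} (hc1 : c 1 = 0)
    (hrec : ∀ ℓ : ℕ, 1 ≤ ℓ → c (ℓ + 1) = (ℓ : R) + (c ℓ - (ℓ : R)) * s) {ℓ : ℕ} (hℓ : 1 ≤ ℓ) :
    (ℓ : R) - c ℓ = ∑ i ∈ range ℓ, s ^ i := by
  induction ℓ, hℓ using Nat.le_induction with
  | base => simp [hc1]
  | succ ℓ hℓ ih =>
    calc ((ℓ + 1 : ℕ) : R) - c (ℓ + 1) = ((ℓ : R) - c ℓ) * s + 1 := by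
          rw [hrec ℓ hℓ]; push_cast; noncomm_ring
      _ = ∑ i ∈ range (ℓ + 1), s ^ i := by rw [ih, geom_sum_succ_eq_geom_sum_mul_add_one]

section DivisionRing

variable {K : Type*} [DivisionRing K] {r : K}

theorem inv_pow_sub_one_mul_inv_eq_one_sub_geom_sum (hr0 : r ≠ 0) (hr1 : r ≠ 1) (k : ℕ) :
    (r⁻¹ ^ k - 1) * (r - 1)⁻¹ = 1 - ∑ i ∈ range (k + 1), r⁻¹ ^ i := by
  have hinv : r⁻¹ - 1 = -(r⁻¹ * (r - 1)) := by
    rw [mul_sub, inv_mul_cancel₀ hr0, mul_one, neg_sub]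
  calc (r⁻¹ ^ k - 1) * (r - 1)⁻¹
      = (∑ i ∈ range k, r⁻¹ ^ i) * (r⁻¹ - 1) * (r - 1)⁻¹ := by rw [geom_sum_mul]
    _ = -((∑ i ∈ range k, r⁻¹ ^ i) * r⁻¹) := by
        rw [hinv, mul_neg, neg_mul, ← mul_assoc, mul_inv_cancel_right₀ (sub_ne_zero.mpr hr1)]
    _ = 1 - ∑ i ∈ range (k + 1), r⁻¹ ^ i := by
        rw [geom_sum_succ_eq_geom_sum_mul_add_one, sub_add_cancel_right]

theorem geom_sum_inv_eq_zero_iff_orderOf_dvd (hr1 : r ≠ 1) (n : ℕ) :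
    ∑ i ∈ range n, r⁻¹ ^ i = 0 ↔ orderOf r ∣ n := by
  have hinv : r⁻¹ - 1 ≠ 0 := sub_ne_zero.mpr (inv_ne_one.mpr hr1)
  rw [← mul_eq_zero_iff_right hinv, geom_sum_mul, sub_eq_zero, inv_pow, inv_eq_one,
    orderOf_dvd_iff_pow_eq_one]

theorem Lpr_partial_sum_ne_general (hr0 : r ≠ 0) (hr1 : r ≠ 1) {c : ℕ → K} (hc1 : c 1 = 0)
    (hrec : ∀ ℓ : ℕ, 1 ≤ ℓ → c (ℓ + 1) = (ℓ : K) + (c ℓ - (ℓ : K)) * r⁻¹)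
    {ℓ : ℕ} (hℓ : 1 ≤ ℓ) :
    (c ℓ = (ℓ : K) ↔ orderOf r ∣ ℓ) ∧
    (r⁻¹ ^ (ℓ - 1) - 1) * (r - 1)⁻¹ + ((ℓ : K) - 1) = c ℓ := by
  have hsum := natCast_sub_eq_geom_sum_of_rec hc1 hrec hℓ
  constructor
  · rw [← geom_sum_inv_eq_zero_iff_orderOf_dvd hr1, ← hsum, sub_eq_zero, eq_comm]
  · rw [inv_pow_sub_one_mul_inv_eq_one_sub_geom_sum hr0 hr1, Nat.sub_add_cancel hℓ, ← hsum]
    abel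

end DivisionRing

/-- When `r` is a primitive root modulo the odd prime `p`, the partial natural
sums `c ℓ` (for `1 ≤ ℓ ≤ p-2`) never equal `ℓ`; equivalently, the closed
formula equals `ℓ` only when `p - 1` divides `ℓ`. -/
theorem Lpr_partial_sum_ne (p : ℕ) (hp : p.Prime) (hodd : p ≠ 2)
    (r : ZMod p) (hr : ∀ x : ZMod p, x ≠ 0 → ∃ m : ℕ, r ^ m = x)
    (c : ℕ → ZMod p) (hc1 : c 1 = 0)
    (hrec : ∀ ℓ : ℕ, 1 ≤ ℓ → c (ℓ + 1) = (ℓ : ZMod p) + (c ℓ - (ℓ : ZMod p)) * r⁻¹) :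
    (∀ ℓ : ℕ, 1 ≤ ℓ → ℓ ≤ p - 2 → c ℓ ≠ (ℓ : ZMod p)) ∧
    (∀ ℓ : ℕ, 1 ≤ ℓ →
      ((r⁻¹) ^ (ℓ - 1) - 1) * (r - 1)⁻¹ + ((ℓ : ZMod p) - 1) = (ℓ : ZMod p) →
        (p - 1) ∣ ℓ) := by
  have : Fact p.Prime := ⟨hp⟩
  have hp2 : 2 < p := lt_of_le_of_ne hp.two_le hodd.symm
  have hcard : Nat.card (ZMod p)ˣ = p - 1 := by rw [Nat.card_eq_fintype_card, ZMod.card_units]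
  have : Nontrivial (ZMod p)ˣ := Finite.one_lt_card_iff_nontrivial.mp (by omega)
  have hgen : ∀ u : (ZMod p)ˣ, ∃ m : ℕ, r ^ m = u := fun u => hr u u.ne_zero
  have hord : orderOf r = p - 1 :=
    (orderOf_eq_card_units_of_forall_units_exists_pow_eq hgen).trans hcard
  have hgeneral {ℓ : ℕ} (hℓ : 1 ≤ ℓ) := hord ▸ Lpr_partial_sum_ne_general
    (isUnit_of_forall_units_exists_pow_eq hgen).ne_zero
    (ne_one_of_forall_units_exists_pow_eq hgen) hc1 hrec hℓ
  exact ⟨fun ℓ h1 hle h => Nat.not_dvd_of_pos_of_lt h1 (by omega) ((hgeneral h1).1.mp h),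
    fun ℓ h1 h => (hgeneral h1).1.mp ((hgeneral h1).2.symm.trans h)⟩
end

section
/- Let p be an odd prime and let r be an element of ZMod p with r ≠ 0 and r ≠ 1, and let a, b ∈ ZMod p with a ≠ 0. Define sequences c, d : ℕ → ZMod p by c 1 = 0, c (ℓ+1) = (ℓ : ZMod p) + (c ℓ - (ℓ : ZMod p)) * r⁻¹, and d 1 = b, d (ℓ+1) = (a*(ℓ : ZMod p) + b) + (d ℓ - (a*(ℓ : ZMod p) + b)) * r⁻¹, for ℓ ≥ 1. Then d ℓ = a * (c ℓ) + b for every integer ℓ ≥ 1. In particular, since c (p-1) = -1, also d (p-1) = b - a, so the natural sum of the permuted symbols π_{(a,b)}(1),…,π_{(a,b)}(p) in the loop L_{p,r} is also zero. -/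
/-!
An affine map `t ↦ a * t + b` commutes with the operation `(i, j) ↦ j + (i - j) * s`, so it carries
partial sums to partial sums. The partial sums of `0, 1, 2, …` are `ℓ - (1 + s + ⋯ + s ^ (ℓ - 1))`.
In `ZMod p` with `s = r⁻¹ ≠ 1`, Fermat's little theorem makes the geometric sum vanish at
`ℓ = p - 1`, which leaves `-1`.
-/

open Finset Function

/-- The sequence `c` records the partial sums of the symbols `x 0, x 1, x 2, …` under a binary
operation `f`, bracketed to the left: `c ℓ` combines the first `ℓ` symbols. There is no empty sum,
so `c 0` is unconstrained. -/
structure IsPartialSums {α : Type*} (f : α → α → α) (x c : ℕ → α) : Prop where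
  one : c 1 = x 0
  succ : ∀ ℓ, 1 ≤ ℓ → c (ℓ + 1) = f (c ℓ) (x ℓ)

/-- The entry in row `i` and column `j` of the Latin square `H_{p,r}`, over an arbitrary ring. The
parameter `s` stands for `r⁻¹`, so that no inverse is needed. -/
def affineLatinEntry {R : Type*} [Ring R] (s i j : R) : R :=
  j + (i - j) * s

namespace IsPartialSums

section Operation

variable {α β : Type*} {f : α → α → α} {x c d : ℕ → α}

theorem map {g : β → β → β} {π : α → β} (hc : IsPartialSums f x c) (hπ : Semiconj₂ π f g) :
    IsPartialSums g (π ∘ x) (π ∘ c) where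
  one := congrArg π hc.one
  succ ℓ hℓ := (congrArg π (hc.succ ℓ hℓ)).trans (hπ (c ℓ) (x ℓ))

theorem unique (hc : IsPartialSums f x c) (hd : IsPartialSums f x d) {ℓ : ℕ} (hℓ : 1 ≤ ℓ) :
    c ℓ = d ℓ := by
  induction ℓ, hℓ using Nat.le_induction with
  | base => rw [hc.one, hd.one]
  | succ n hn ih => rw [hc.succ n hn, hd.succ n hn, ih]

end Operation

theorem eq_natCast_sub_geom_sum {R : Type*} [Ring R] {s : R} {c : ℕ → R}
    (hc : IsPartialSums (affineLatinEntry s) Nat.cast c) {ℓ : ℕ} (hℓ : 1 ≤ ℓ) :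
    c ℓ = ℓ - ∑ i ∈ range ℓ, s ^ i := by
  induction ℓ, hℓ using Nat.le_induction with
  | base => simp [hc.one]
  | succ n hn ih =>
    have geom_sum_step : ∑ i ∈ range (n + 1), s ^ i = (∑ i ∈ range n, s ^ i) * s + 1 := by
      simp only [sum_range_succ', pow_succ, pow_zero, sum_mul]
    rw [hc.succ n hn, affineLatinEntry, ih, geom_sum_step, Nat.cast_succ]
    noncomm_ring

end IsPartialSums

theorem semiconj₂_affineLatinEntry {R : Type*} [Ring R] (s a b : R) :
    Semiconj₂ (fun t ↦ a * t + b) (affineLatinEntry s) (affineLatinEntry s) := by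
  intro i j
  simp only [affineLatinEntry]
  noncomm_ring

theorem natCast_card_sub_one_sub_geom_sum {K : Type*} [Field K] [Fintype K] {s : K}
    (hs0 : s ≠ 0) (hs1 : s ≠ 1) :
    ((Fintype.card K - 1 : ℕ) : K) - ∑ i ∈ range (Fintype.card K - 1), s ^ i = -1 := by
  have geom_sum_eq_zero : ∑ i ∈ range (Fintype.card K - 1), s ^ i = 0 := by
    rw [geom_sum_eq hs1, FiniteField.pow_card_sub_one_eq_one s hs0, sub_self, zero_div]
  rw [geom_sum_eq_zero, Nat.cast_pred Fintype.card_pos, FiniteField.cast_card_eq_zero, zero_sub,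
    sub_zero]

theorem Lpr_permuted_partial_sums_general {R : Type*} [Ring R] (s a b : R) (c d : ℕ → R)
    (hc1 : c 1 = 0) (hcrec : ∀ ℓ : ℕ, 1 ≤ ℓ → c (ℓ + 1) = (ℓ : R) + (c ℓ - (ℓ : R)) * s)
    (hd1 : d 1 = b)
    (hdrec : ∀ ℓ : ℕ, 1 ≤ ℓ →
      d (ℓ + 1) = (a * (ℓ : R) + b) + (d ℓ - (a * (ℓ : R) + b)) * s) :
    (∀ ℓ : ℕ, 1 ≤ ℓ → d ℓ = a * c ℓ + b) ∧
      ∀ ℓ : ℕ, 1 ≤ ℓ → d ℓ = a * (ℓ - ∑ i ∈ range ℓ, s ^ i) + b := by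
  have hc : IsPartialSums (affineLatinEntry s) Nat.cast c := ⟨by simpa using hc1, hcrec⟩
  have hd : IsPartialSums (affineLatinEntry s) ((fun t ↦ a * t + b) ∘ Nat.cast) d :=
    ⟨by simpa using hd1, hdrec⟩
  have d_eq (ℓ : ℕ) (hℓ : 1 ≤ ℓ) : d ℓ = a * c ℓ + b :=
    hd.unique (hc.map (semiconj₂_affineLatinEntry s a b)) hℓ
  exact ⟨d_eq, fun ℓ hℓ ↦ by rw [d_eq ℓ hℓ, hc.eq_natCast_sub_geom_sum hℓ]⟩

/-- The affine permutation `π_{(a,b)}` transports the partial natural sums of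
`L_{p,r}`: if `c` records the partial sums of the unpermuted symbols and `d`
those of the permuted symbols, then `d ℓ = a * c ℓ + b` for all `ℓ ≥ 1`; in
particular `d (p-1) = b - a`, so the natural sum of the permuted symbols in
`L_{p,r}` is also zero. -/
theorem Lpr_permuted_partial_sums (p : ℕ) (hp : p.Prime) (hodd : p ≠ 2)
    (r : ZMod p) (hr0 : r ≠ 0) (hr1 : r ≠ 1)
    (a b : ZMod p) (ha : a ≠ 0)
    (c d : ℕ → ZMod p) (hc1 : c 1 = 0)
    (hcrec : ∀ ℓ : ℕ, 1 ≤ ℓ → c (ℓ + 1) = (ℓ : ZMod p) + (c ℓ - (ℓ : ZMod p)) * r⁻¹)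
    (hd1 : d 1 = b)
    (hdrec : ∀ ℓ : ℕ, 1 ≤ ℓ →
      d (ℓ + 1) = (a * (ℓ : ZMod p) + b) + (d ℓ - (a * (ℓ : ZMod p) + b)) * r⁻¹) :
    (∀ ℓ : ℕ, 1 ≤ ℓ → d ℓ = a * c ℓ + b) ∧ d (p - 1) = b - a := by
  have : Fact p.Prime := ⟨hp⟩
  have c_last := natCast_card_sub_one_sub_geom_sum (inv_ne_zero hr0) (inv_ne_one.mpr hr1)
  rw [ZMod.card] at c_last
  obtain ⟨d_eq, d_closed⟩ := Lpr_permuted_partial_sums_general r⁻¹ a b c d hc1 hcrec hd1 hdrec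
  exact ⟨d_eq, by rw [d_closed (p - 1) (Nat.le_sub_one_of_lt hp.one_lt), c_last]; ring⟩
end

section
/- Let k be a positive integer. There exists an idempotent Latin square of order k — that is, a function L : Fin k → Fin k → Fin k such that for every i the map j ↦ L i j is a bijection of Fin k, for every j the map i ↦ L i j is a bijection of Fin k, and L i i = i for every i — if and only if k ≠ 2. -/
/-!
On two points, the off-diagonal entry in the row of `x` and the column of `y` must differ from both
`x` and `y`, so no idempotent Latin square exists.

In an abelian group in which doubling is bijective, the reflections `(i, j) ↦ 2i - j` form an
idempotent Latin square; this covers odd orders (`ZMod n`) and infinite types (sums of copies of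
`ZMod 3`). For `c ≠ 0` the cells `(i, i + c)` form a transversal of that square which avoids the
diagonal. Moving its symbols to a new row and column, and filling its cells and the new corner
with a new symbol, yields an idempotent Latin square with one more point, which covers the even
orders at least `4`.
-/

open Function Cardinal

/-- A Latin square with rows, columns and symbols all indexed by the same, possibly infinite,
type: the multiplication table of a quasigroup. -/
structure IsLatinSquare {α : Type*} (L : α → α → α) : Prop where
  bijective_row (i : α) : Bijective fun j ↦ L i j
  bijective_col (j : α) : Bijective fun i ↦ L i j

theorem isLatinSquare_iff {α : Type*} {L : α → α → α} :
    IsLatinSquare L ↔ (∀ i, Bijective fun j ↦ L i j) ∧ ∀ j, Bijective fun i ↦ L i j :=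
  ⟨fun h ↦ ⟨h.bijective_row, h.bijective_col⟩, fun h ↦ ⟨h.1, h.2⟩⟩

/-- The cells `(i, t i)` form a transversal of `L`: every symbol occurs in exactly one of them.
That they meet every row and column once is encoded by `t` being a permutation. -/
def IsTransversal {α : Type*} (L : α → α → α) (t : Equiv.Perm α) : Prop :=
  Bijective fun i ↦ L i (t i)

/-- Existence of an idempotent Latin square on a given type, an invariant of its cardinality. -/
def HasIdempotentLatinSquare (α : Type*) : Prop :=
  ∃ L : α → α → α, IsLatinSquare L ∧ ∀ i, L i i = i

theorem HasIdempotentLatinSquare.of_equiv {α β : Type*} (e : α ≃ β)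
    (hα : HasIdempotentLatinSquare α) : HasIdempotentLatinSquare β := by
  obtain ⟨L, hL, hdiag⟩ := hα
  refine ⟨fun i j ↦ e (L (e.symm i) (e.symm j)), ⟨fun i ↦ ?_, fun j ↦ ?_⟩, fun i ↦ ?_⟩
  · exact e.bijective.comp ((hL.bijective_row _).comp e.symm.bijective)
  · exact e.bijective.comp ((hL.bijective_col _).comp e.symm.bijective)
  · simp only [hdiag, e.apply_symm_apply]

theorem not_hasIdempotentLatinSquare_of_mk_eq_two {α : Type*} (hα : #α = 2) :
    ¬ HasIdempotentLatinSquare α := by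
  rintro ⟨L, hL, hdiag⟩
  obtain ⟨x, y, hxy, huniv⟩ := mk_eq_two_iff.mp hα
  have hx : L x y ≠ x := fun h ↦ hxy ((hL.bijective_row x).injective ((hdiag x).trans h.symm))
  have hy : L x y ≠ y := fun h ↦ hxy ((hL.bijective_col y).injective (h.trans (hdiag y).symm))
  have hmem : L x y ∈ ({x, y} : Set α) := huniv ▸ Set.mem_univ _
  exact hmem.elim hx hy

section Prolongation

variable {α : Type*} {L : α → α → α} {t : Equiv.Perm α}

theorem bijective_option_map {β : Type*} {f : α → β} (hf : Bijective f) :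
    Bijective (Option.map f) :=
  (Equiv.ofBijective f hf).optionCongr.bijective

variable [DecidableEq α]

/-- The prolongation of a Latin square along the transversal of cells `(i, t i)`: these cells and
the new corner receive the new symbol `none`, and each symbol of the transversal moves to the new
column in its row and to the new row in its column. -/
def prolongation (L : α → α → α) (t : Equiv.Perm α) : Option α → Option α → Option α
  | some i, some j => if j = t i then none else some (L i j)
  | some i, none => some (L i (t i))
  | none, some j => some (L (t.symm j) j)
  | none, none => none

theorem prolongation_some_left (i : α) (o : Option α) :
    prolongation L t (some i) o = (Equiv.swap none (some (t i)) o).map (L i) := by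
  cases o <;> simp only [prolongation, Equiv.swap_apply_def] <;> grind

theorem prolongation_some_right (o : Option α) (j : α) :
    prolongation L t o (some j) = (Equiv.swap none (some (t.symm j)) o).map (L · j) := by
  cases o <;> simp only [prolongation, Equiv.swap_apply_def] <;> grind

theorem prolongation_none_left (o : Option α) :
    prolongation L t none o = o.map fun j ↦ L (t.symm j) j := by
  cases o <;> rfl

theorem prolongation_none_right (o : Option α) :
    prolongation L t o none = o.map fun i ↦ L i (t i) := by
  cases o <;> rfl

theorem IsLatinSquare.prolongation (hL : IsLatinSquare L) (ht : IsTransversal L t) :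
    IsLatinSquare (prolongation L t) where
  bijective_row
    | some i => by
      simp only [prolongation_some_left]
      exact (bijective_option_map (hL.bijective_row i)).comp (Equiv.bijective _)
    | none => by
      have hsymm : Bijective fun j ↦ L (t.symm j) j := by
        simpa [comp_def] using Bijective.comp ht t.symm.bijective
      simp only [prolongation_none_left]
      exact bijective_option_map hsymm
  bijective_col
    | some j => by
      simp only [prolongation_some_right]
      exact (bijective_option_map (hL.bijective_col j)).comp (Equiv.bijective _)
    | none => by
      simp only [prolongation_none_right]
      exact bijective_option_map ht

theorem prolongation_self (hdiag : ∀ i, L i i = i) (ht : ∀ i, t i ≠ i) (o : Option α) :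
    prolongation L t o o = o := by
  cases o with
  | none => rfl
  | some i => simp [prolongation, (ht i).symm, hdiag i]

end Prolongation

section PointReflection

variable {G : Type*} [AddCommGroup G]

theorem pointReflection_eq_two_nsmul_sub (i j : G) :
    Equiv.pointReflection i j = 2 • i - j := by
  rw [Equiv.pointReflection_apply, vsub_eq_sub, vadd_eq_add, two_nsmul]
  abel

theorem isLatinSquare_pointReflection (h2 : Bijective fun x : G ↦ 2 • x) :
    IsLatinSquare fun i j : G ↦ Equiv.pointReflection i j where
  bijective_row i := (Equiv.pointReflection i).bijective
  bijective_col j := by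
    simp only [pointReflection_eq_two_nsmul_sub]
    exact (Equiv.subRight j).bijective.comp h2

theorem isTransversal_pointReflection_addRight (c : G) :
    IsTransversal (fun i j : G ↦ Equiv.pointReflection i j) (Equiv.addRight c) := by
  have hentry (i : G) : Equiv.pointReflection i (Equiv.addRight c i) = i - c := by
    rw [pointReflection_eq_two_nsmul_sub, Equiv.coe_addRight, two_nsmul, add_sub_add_left_eq_sub]
  simp only [IsTransversal, hentry]
  exact (Equiv.subRight c).bijective

theorem HasIdempotentLatinSquare.of_bijective_two_nsmul (h2 : Bijective fun x : G ↦ 2 • x) :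
    HasIdempotentLatinSquare G :=
  ⟨_, isLatinSquare_pointReflection h2, fun i ↦ Equiv.pointReflection_self i⟩

theorem HasIdempotentLatinSquare.option_of_bijective_two_nsmul [Nontrivial G]
    (h2 : Bijective fun x : G ↦ 2 • x) : HasIdempotentLatinSquare (Option G) := by
  classical
  obtain ⟨c, hc⟩ := exists_ne (0 : G)
  refine ⟨_, (isLatinSquare_pointReflection h2).prolongation
    (isTransversal_pointReflection_addRight c), prolongation_self ?_ ?_⟩
  · exact fun i ↦ Equiv.pointReflection_self i
  · simpa using hc

end PointReflection

theorem bijective_two_nsmul_of_odd_card {G : Type*} [AddGroup G] (hG : Odd (Nat.card G)) :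
    Bijective fun x : G ↦ 2 • x :=
  (nsmulCoprime (Nat.coprime_two_right.mpr hG)).bijective

theorem bijective_two_nsmul_of_zmod_three_module {G : Type*} [AddCommGroup G]
    [Module (ZMod 3) G] : Bijective fun x : G ↦ 2 • x := by
  refine Involutive.bijective fun x ↦ ?_
  calc 2 • 2 • x = 3 • x + x := by abel
    _ = x := by rw [ZModModule.char_nsmul_eq_zero 3, zero_add]

section Cardinality

variable {α : Type*}

theorem HasIdempotentLatinSquare.of_odd_card (hα : Odd (Nat.card α)) :
    HasIdempotentLatinSquare α := by
  have : NeZero (Nat.card α) := ⟨hα.pos.ne'⟩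
  have : Finite α := Nat.finite_of_card_ne_zero (NeZero.ne _)
  have hcard : Nat.card (ZMod (Nat.card α)) = Nat.card α := Nat.card_zmod _
  obtain ⟨e⟩ := Finite.card_eq.mp hcard
  have hbij : Bijective fun x : ZMod (Nat.card α) ↦ 2 • x :=
    bijective_two_nsmul_of_odd_card (by rwa [hcard])
  exact (of_bijective_two_nsmul hbij).of_equiv e

theorem HasIdempotentLatinSquare.of_even_card (hα : Even (Nat.card α)) (h2 : 2 < Nat.card α) :
    HasIdempotentLatinSquare α := by
  obtain ⟨n, hn⟩ : ∃ n, Nat.card α = n + 1 := ⟨Nat.card α - 1, by lia⟩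
  have hodd : Odd n := by grind
  have : Finite α := Nat.finite_of_card_ne_zero (by lia)
  have : NeZero n := ⟨by lia⟩
  have : Fact (1 < n) := ⟨by lia⟩
  have hcard : Nat.card (Option (ZMod n)) = Nat.card α := by
    rw [Finite.card_option, Nat.card_zmod, hn]
  obtain ⟨e⟩ := Finite.card_eq.mp hcard
  have hbij : Bijective fun x : ZMod n ↦ 2 • x :=
    bijective_two_nsmul_of_odd_card (by rwa [Nat.card_zmod])
  exact (option_of_bijective_two_nsmul hbij).of_equiv e

theorem HasIdempotentLatinSquare.of_infinite [Infinite α] : HasIdempotentLatinSquare α := by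
  have hcard : #(α →₀ ZMod 3) = #α := by
    rw [mk_finsupp_lift_of_infinite, lift_uzero, max_eq_left]
    exact (lift_lt_aleph0.mpr (lt_aleph0_of_finite _)).le.trans (aleph0_le_mk α)
  obtain ⟨e⟩ := Cardinal.eq.mp hcard
  exact (of_bijective_two_nsmul bijective_two_nsmul_of_zmod_three_module).of_equiv e

theorem HasIdempotentLatinSquare.of_isEmpty [IsEmpty α] : HasIdempotentLatinSquare α :=
  ⟨isEmptyElim, ⟨isEmptyElim, isEmptyElim⟩, isEmptyElim⟩

end Cardinality

theorem idempotent_latin_square_exists_iff_general (α : Type*) :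
    HasIdempotentLatinSquare α ↔ #α ≠ 2 := by
  refine ⟨fun hα h2 ↦ not_hasIdempotentLatinSquare_of_mk_eq_two h2 hα, fun h2 ↦ ?_⟩
  obtain hinf | hfin := (finite_or_infinite α).symm
  · exact .of_infinite
  obtain hempty | hne := isEmpty_or_nonempty α
  · exact .of_isEmpty
  have hcard : Nat.card α ≠ 2 := fun h ↦ h2 (by rw [← Nat.cast_card, h, Nat.cast_ofNat])
  obtain heven | hodd := (Nat.card α).even_or_odd
  · have hpos : 0 < Nat.card α := Nat.card_pos
    exact .of_even_card heven (by grind)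
  · exact .of_odd_card hodd

/-- An idempotent Latin square of order `k` exists if and only if `k ≠ 2`. -/
theorem idempotent_latin_square_exists_iff (k : ℕ) (hk : 0 < k) :
    (∃ L : Fin k → Fin k → Fin k,
      (∀ i : Fin k, Function.Bijective fun j : Fin k => L i j) ∧
      (∀ j : Fin k, Function.Bijective fun i : Fin k => L i j) ∧
      (∀ i : Fin k, L i i = i))
    ↔ k ≠ 2 := by
  have hcard : #(Fin k) ≠ 2 ↔ k ≠ 2 := by rw [mk_fin]; norm_cast
  simpa only [HasIdempotentLatinSquare, isLatinSquare_iff, and_assoc, hcard] using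
    idempotent_latin_square_exists_iff_general (Fin k)
end
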